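/- Let k be a field of characteristic 3, let a, b ∈ k with a ≠ 0 and b ≠ 0, let P ∈ k[t] with deg P ≤ 6, and set Δ = a³t¹² + a²t¹⁰ + t³·P + b²t² + b³ ∈ k[t]. Then for all p, q, r ∈ k (not necessarily distinct), the polynomial (t−p)³(t−q)³(t−r)³ does not divide Δ. (Consequently, a rational elliptic surface in characteristic 3 with only multiplicative singular fibres and with b₂ having distinct roots cannot have three multiplicative fibres each of multiplicity at least three.) -/

import Mathlib

/-!
In characteristic 3 the proposed divisor equals `(t³ - p³)(t³ - q³)(t³ - r³)`, a monic polynomial of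
degree 9 in `t³`. Its cofactor `H` has degree at most 3, since `Δ` has degree at most 12. Multiplying
by a polynomial in `t³` preserves the residue modulo 3 of exponents, so the only coefficient of `H`
contributing to `t²` and `t¹¹` in `Δ` is `H₂`. But `Δ` has no `t¹¹` term, which forces `H₂ = 0`,
whereas its `t²` coefficient `b²` is a multiple of `H₂`; this contradicts `b ≠ 0`.
-/

open Polynomial

theorem stmt4 {k : Type*} [Field k] [CharP k 3]
    (a b : k) (ha : a ≠ 0) (hb : b ≠ 0) (P : k[X]) (hP : P.degree ≤ 6)
    (Δ : k[X])
    (hΔ : Δ = C a ^ 3 * X ^ 12 + C a ^ 2 * X ^ 10 + X ^ 3 * P + C b ^ 2 * X ^ 2 + C b ^ 3) :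
    ∀ p q r : k, ¬ ((X - C p) ^ 3 * (X - C q) ^ 3 * (X - C r) ^ 3 ∣ Δ) := by
  rintro p q r ⟨H, hH⟩
  have : Fact (Nat.Prime 3) := ⟨Nat.prime_three⟩
  have hPn : P.natDegree ≤ 6 := natDegree_le_of_degree_le hP
  have hdeg : Δ.natDegree ≤ 12 := by
    rw [hΔ, ← C_pow, ← C_pow, ← C_pow, ← C_pow]
    have h3 : (X ^ 3 * P).natDegree ≤ 12 := by
      refine natDegree_mul_le.trans ?_
      rw [natDegree_X_pow]
      omega
    refine natDegree_add_le_of_degree_le (natDegree_add_le_of_degree_le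
      (natDegree_add_le_of_degree_le (natDegree_add_le_of_degree_le ?_ ?_) h3) ?_) ?_
    all_goals compute_degree
    all_goals norm_num
  have hHdeg : H.natDegree ≤ 3 := by
    by_cases h0 : H = 0
    · simp [h0]
    have hm (x : k) : ((X - C x) ^ 3).Monic := (monic_X_sub_C x).pow 3
    rw [hH, (((hm p).mul (hm q)).mul (hm r)).natDegree_mul' h0,
      ((hm p).mul (hm q)).natDegree_mul (hm r), (hm p).natDegree_mul (hm q)] at hdeg
    simp only [natDegree_pow, natDegree_X_sub_C] at hdeg
    omega
  have hcube (x : k) : (X - C x) ^ 3 = X ^ 3 - C (x ^ 3) := by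
    rw [sub_pow_char, C_pow]
  have hexp : Δ = X ^ 9 * H + C (-(p ^ 3 + q ^ 3 + r ^ 3)) * (X ^ 6 * H)
      + C (p ^ 3 * q ^ 3 + p ^ 3 * r ^ 3 + q ^ 3 * r ^ 3) * (X ^ 3 * H)
      + C (-(p ^ 3 * q ^ 3 * r ^ 3)) * H := by
    rw [hH, hcube, hcube, hcube]
    simp only [C_neg, C_add, C_mul]
    ring
  have hz (n : ℕ) (hn : 3 < n) : H.coeff n = 0 :=
    coeff_eq_zero_of_natDegree_lt (by omega)
  have hP8 : P.coeff 8 = 0 := coeff_eq_zero_of_natDegree_lt (by omega)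
  rw [hΔ, ← C_pow, ← C_pow, ← C_pow, ← C_pow] at hexp
  have h11 := congrArg (fun f => coeff f 11) hexp
  have h2 := congrArg (fun f => coeff f 2) hexp
  simp only [coeff_add, coeff_C_mul, coeff_X_pow_mul', coeff_X_pow, coeff_C] at h11 h2
  norm_num [hz, hP8] at h11 h2
  rw [← h11] at h2
  simp [hb] at h2
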